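/- arXiv:math/0409323 — 3 statements merged into one kernel-verified Lean document; each statement's English description precedes it below -/
import Mathlib

section
/- For every n ≥ 1, the polynomial f_n(t) = Σ_{F ∈ ℱ_n} t^{pv(F)} satisfies f_n(t) = t · Π_{i=1}^{n−1} ((i+1)·t + (n − i)). -/
/-- The vertex set `[n] = {1,…,n}`. -/
def Vn (n : ℕ) : Type := {v : ℕ // v ∈ Finset.Icc 1 n}

/-- A parent function on `[n]` encodes a forest of rooted trees iff following parents
always terminates, i.e. the "is parent of" relation is well-founded (equivalently, the
functional graph is acyclic, so every connected component is a rooted tree; the roots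
are the vertices with parent `none`). -/
def IsForest {n : ℕ} (p : Vn n → Option (Vn n)) : Prop :=
  WellFounded fun a b => p b = some a

/-- `w` is a descendant of `v` iff `v` lies on the path from `w` to its root, i.e. `v`
is reachable from `w` by iterating the parent function.  A vertex `v` is *proper* if it
is the smallest among its descendants (including itself); `pvF p` is the number of
proper vertices. -/
noncomputable def pvF {n : ℕ} (p : Vn n → Option (Vn n)) : ℕ :=
  Set.ncard {v : Vn n |
    ∀ w : Vn n, Relation.ReflTransGen (fun x y => p x = some y) w v → v.1 ≤ w.1}

/-- `ℱ_n`: the forests on `[n]`. -/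
def Fo (n : ℕ) : Type := {p : Vn n → Option (Vn n) // IsForest p}

namespace ForestAux

set_option linter.unusedSectionVars false

open Relation

variable {α : Type} [Fintype α] [LinearOrder α]

/-- The parent step relation. -/
def St (p : α → Option α) (x y : α) : Prop := p x = some y

/-- Well-foundedness of the parent function. -/
def Fs (p : α → Option α) : Prop := WellFounded fun a b => p b = some a

open Classical in
/-- Forests whose non-sink vertices lie in `D`. -/
noncomputable def For (D : Finset α) : Finset (α → Option α) :=
  Finset.univ.filter fun p => Fs p ∧ ∀ v, v ∉ D → p v = none

open Classical in
/-- Proper vertices in `D`. -/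
noncomputable def PV (D : Finset α) (p : α → Option α) : Finset α :=
  D.filter fun v => ∀ w, ReflTransGen (St p) w v → v ≤ w

/-- The partial path data. -/
structure Pre (D Q : Finset α) (m u : α) (q : α → Option α) (h : α → ℕ) : Prop where
  mD : ∀ v ∈ D, m ≤ v
  mQ : m ∈ Q
  uQ : u ∈ Q
  QD : Q ⊆ D
  step : ∀ y ∈ Q, y ≠ u → ∃ z ∈ Q, q y = some z ∧ h z < h y
  reach : ∀ y ∈ Q, ReflTransGen (fun a b => a ∈ Q ∧ a ≠ u ∧ q a = some b) m y

theorem fs_of_rank (p : α → Option α) (r : α → ℕ)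
    (hr : ∀ a b, p b = some a → r a < r b) : Fs p :=
  Subrelation.wf (r := InvImage (· < ·) r) (fun {a b} hab => hr a b hab)
    (InvImage.wf r Nat.lt_wfRel.wf)

theorem rank_of_fs (p : α → Option α) (hp : Fs p) :
    ∃ r : α → ℕ, ∀ a b, p b = some a → r a < r b := by
  classical
  have hp0 : WellFounded fun a b => p b = some a := hp
  refine ⟨hp0.fix (fun b ih => match hb : p b with
    | none => 0
    | some a => ih a hb + 1), ?_⟩
  intro a b hab
  conv_rhs => rw [WellFounded.fix_eq]
  split
  · rename_i h; rw [hab] at h; cases h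
  · rename_i c h
    rw [hab] at h; cases h; exact Nat.lt_succ_self _

theorem reach_none {p : α → Option α} {w v : α} (hw : p w = none)
    (h : ReflTransGen (St p) w v) : w = v := by
  rcases ReflTransGen.cases_head h with h | ⟨c, hc, _⟩
  · exact h
  · unfold St at hc; rw [hw] at hc; cases hc

theorem no_cycle {p : α → Option α} (hp : Fs p) {u x : α} (hx : p u = some x)
    (h : ReflTransGen (St p) x u) : False := by
  obtain ⟨r, hr⟩ := rank_of_fs p hp
  have key : ∀ y, ReflTransGen (St p) x y → r y ≤ r x := by
    intro y hy
    induction hy with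
    | refl => exact le_rfl
    | tail _ hbc ih => exact (hr _ _ hbc).le.trans ih
  have := key u h
  have := hr _ _ hx
  omega

theorem Pre.reach_u {D Q : Finset α} {m u : α} {q : α → Option α} {h : α → ℕ}
    (P : Pre D Q m u q h) {p : α → Option α} (hpq : ∀ y ∈ Q, y ≠ u → p y = q y) :
    ∀ k, ∀ y ∈ Q, h y ≤ k → ReflTransGen (St p) y u := by
  intro k
  induction k with
  | zero =>
    intro y hy hk
    by_cases hyu : y = u
    · subst hyu; exact .refl
    · obtain ⟨z, _, _, hz⟩ := P.step y hy hyu; omega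
  | succ k ih =>
    intro y hy hk
    by_cases hyu : y = u
    · subst hyu; exact .refl
    · obtain ⟨z, hzQ, hqz, hz⟩ := P.step y hy hyu
      refine ReflTransGen.head (b := z) ?_ (ih z hzQ (by omega))
      unfold St; rw [hpq y hy hyu, hqz]

/-- Extending the path by one vertex. -/
theorem Pre.extend {D Q : Finset α} {m u : α} {q : α → Option α} {h : α → ℕ}
    (P : Pre D Q m u q h) {x : α} (hxD : x ∈ D) (hxQ : x ∉ Q) :
    Pre D (insert x Q) m x (Function.update q u (some x))
      (fun y => if y = x then 0 else h y + 1) := by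
  have hux : u ≠ x := fun e => hxQ (e ▸ P.uQ)
  have hmono : ∀ y, ReflTransGen (fun a b => a ∈ Q ∧ a ≠ u ∧ q a = some b) m y →
      ReflTransGen (fun a b => a ∈ insert x Q ∧ a ≠ x ∧
        Function.update q u (some x) a = some b) m y := by
    intro y hy
    refine ReflTransGen.mono ?_ _ _ hy
    rintro a b ⟨ha, hau, hab⟩
    refine ⟨Finset.mem_insert_of_mem ha, fun e => hxQ (e ▸ ha), ?_⟩
    rw [Function.update_of_ne hau, hab]
  refine ⟨P.mD, Finset.mem_insert_of_mem P.mQ, Finset.mem_insert_self _ _,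
    Finset.insert_subset hxD P.QD, ?_, ?_⟩
  · intro y hy hyx
    have hyQ : y ∈ Q := (Finset.mem_insert.1 hy).resolve_left hyx
    by_cases hyu : y = u
    · subst hyu
      refine ⟨x, Finset.mem_insert_self _ _, by simp, ?_⟩
      simp [hyx]
    · obtain ⟨z, hz, hqz, hlt⟩ := P.step y hyQ hyu
      have hzx : z ≠ x := fun e => hxQ (e ▸ hz)
      refine ⟨z, Finset.mem_insert_of_mem hz, ?_, ?_⟩
      · rw [Function.update_of_ne hyu, hqz]
      · simp [hyx, hzx, hlt]
  · intro y hy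
    rcases Finset.mem_insert.1 hy with e | hyQ
    · subst e
      refine ReflTransGen.tail (hmono u (P.reach u P.uQ)) ?_
      exact ⟨Finset.mem_insert_of_mem P.uQ, hux, by simp⟩
    · exact hmono y (P.reach y hyQ)

theorem mem_D_of_reach {D : Finset α} {p : α → Option α} (hpD : ∀ v, v ∉ D → p v = none)
    {w v : α} (hv : v ∈ D) (h : ReflTransGen (St p) w v) : w ∈ D := by
  by_contra hw
  exact hw (reach_none (hpD w hw) h ▸ hv)

/-- The weight identity. -/
theorem pv_split {D Q : Finset α} {m u : α} {q : α → Option α} {h : α → ℕ}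
    (P : Pre D Q m u q h) {p : α → Option α} (hpq : ∀ y ∈ Q, y ≠ u → p y = q y)
    (hpD : ∀ v, v ∉ D → p v = none) (hu : ∀ x, p u = some x → x ∉ D) :
    (PV D p).card = (PV (D \ Q) (fun v => if v ∈ Q then none else p v)).card + 1 := by
  classical
  set p' : α → Option α := fun v => if v ∈ Q then none else p v with hp'
  have hmono : ∀ w v, ReflTransGen (St p') w v → ReflTransGen (St p) w v := by
    intro w v hwv
    refine ReflTransGen.mono ?_ _ _ hwv
    intro a b hab
    unfold St at *
    rw [hp'] at hab
    dsimp only at hab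
    split at hab
    · cases hab
    · exact hab
  have hback : ∀ v, v ∈ D → v ∉ Q → ∀ w, ReflTransGen (St p) w v →
      ReflTransGen (St p') w v := by
    intro v hvD hvQ w hw
    induction hw using ReflTransGen.head_induction_on with
    | refl => exact .refl
    | @head a c hac _ ih =>
      by_cases haQ : a ∈ Q
      · exfalso
        unfold St at hac
        have hc : c ∈ Q ∨ c ∉ D := by
          by_cases hau : a = u
          · subst hau; exact Or.inr (hu c hac)
          · obtain ⟨z, hz, hqz, _⟩ := P.step a haQ hau
            rw [hpq a haQ hau, hqz] at hac
            cases hac; exact Or.inl hz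
        have hcn : p' c = none := by
          rw [hp']; dsimp only
          split
          · rfl
          · rename_i hcQ; exact hpD c (hc.resolve_left hcQ)
        have := reach_none hcn ih
        subst this
        tauto
      · refine ReflTransGen.head ?_ ih
        unfold St at *
        rw [hp']; simp [haQ, hac]
  have : PV D p = insert m (PV (D \ Q) p') := by
    ext v
    simp only [PV, Finset.mem_filter, Finset.mem_insert, Finset.mem_sdiff]
    constructor
    · rintro ⟨hvD, hv⟩
      by_cases hvQ : v ∈ Q
      · left
        have : ReflTransGen (St p) m v := by
          refine ReflTransGen.mono ?_ _ _ (P.reach v hvQ)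
          rintro a b ⟨haQ, hau, hab⟩
          unfold St; rw [hpq a haQ hau, hab]
        exact le_antisymm (hv m this) (P.mD v hvD)
      · right
        exact ⟨⟨hvD, hvQ⟩, fun w hw => hv w (hmono w v hw)⟩
    · rintro (e | ⟨⟨hvD, hvQ⟩, hv⟩)
      · subst e
        exact ⟨P.QD P.mQ, fun w hw => P.mD w (mem_D_of_reach hpD (P.QD P.mQ) hw)⟩
      · exact ⟨hvD, fun w hw => hv w (hback v hvD hvQ w hw)⟩
  rw [this, Finset.card_insert_of_notMem]
  simp [PV, P.mQ]

/-- Gluing a forest on `D \ Q` to the path. -/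
theorem glue {D Q : Finset α} {m u : α} {q : α → Option α} {h : α → ℕ}
    (P : Pre D Q m u q h) {x : Option α} (hx : ∀ y, x = some y → y ∉ D)
    {p' : α → Option α} (hp' : p' ∈ For (D \ Q)) :
    (fun v => if v = u then x else if v ∈ Q then q v else p' v) ∈ For D := by
  classical
  simp only [For, Finset.mem_filter, Finset.mem_univ, true_and] at hp' ⊢
  obtain ⟨hf, hn⟩ := hp'
  obtain ⟨r, hr⟩ := rank_of_fs p' hf
  constructor
  · obtain ⟨M, hM⟩ : ∃ M, ∀ y, h y ≤ M :=
      ⟨Finset.univ.sup h, fun y => Finset.le_sup (Finset.mem_univ y)⟩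
    refine fs_of_rank _ (fun y => if y ∈ Q then h y + 1 else if y ∈ D then r y + M + 2 else 0) ?_
    intro a b hab
    beta_reduce at hab ⊢
    by_cases hbu : b = u
    · subst hbu
      simp only [if_true] at hab
      have haD := hx a hab
      have haQ : a ∉ Q := fun e => haD (P.QD e)
      simp [haD, haQ, P.uQ]
    · rw [if_neg hbu] at hab
      by_cases hbQ : b ∈ Q
      · rw [if_pos hbQ] at hab
        obtain ⟨z, hz, hqz, hlt⟩ := P.step b hbQ hbu
        rw [hqz] at hab; cases hab
        simp [hz, hbQ, hlt]
      · rw [if_neg hbQ] at hab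
        have hbD : b ∈ D := by
          by_contra hb
          rw [hn b (by simp [hb])] at hab; cases hab
        have := hr a b hab
        have := hM a
        simp only [hbQ, hbD, if_true, if_false]
        split_ifs <;> omega
  · intro v hv
    have hvQ : v ∉ Q := fun e => hv (P.QD e)
    have hvu : v ≠ u := fun e => hvQ (e ▸ P.uQ)
    simp [hvQ, hvu, hn v (by simp [hv])]

/-- The sum over all forests with a given complete path from the minimum to a sink. -/
theorem sum_terminal {D Q : Finset α} {m u : α} {q : α → Option α} {h : α → ℕ}
    (P : Pre D Q m u q h) {x : Option α} (hx : ∀ y, x = some y → y ∉ D) (t : ℚ) :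
    (∑ p ∈ For D with (∀ y ∈ Q, y ≠ u → p y = q y) ∧ p u = x, t ^ (PV D p).card)
      = t * ∑ p ∈ For (D \ Q), t ^ (PV (D \ Q) p).card := by
  classical
  rw [Finset.mul_sum]
  refine Finset.sum_bij' (fun p _ => fun v => if v ∈ Q then none else p v)
    (fun p' _ => fun v => if v = u then x else if v ∈ Q then q v else p' v) ?_ ?_ ?_ ?_ ?_
  · intro p hp
    simp only [For, Finset.mem_filter, Finset.mem_univ, true_and] at hp ⊢
    obtain ⟨⟨hf, hn⟩, _⟩ := hp
    constructor
    · refine Subrelation.wf ?_ hf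
      intro a b hab
      dsimp only at hab
      split at hab
      · cases hab
      · exact hab
    · intro v hv
      by_cases hvQ : v ∈ Q
      · simp [hvQ]
      · simp only [hvQ, if_false]
        exact hn v (fun e => hv (by simp [e, hvQ]))
  · intro p' hp'
    rw [Finset.mem_filter]
    refine ⟨glue P hx hp', ?_, by simp⟩
    intro y hy hyu
    simp [hy, hyu]
  · intro p hp
    simp only [Finset.mem_filter] at hp
    funext v
    by_cases hvu : v = u
    · subst hvu; simp [hp.2.2]
    · by_cases hvQ : v ∈ Q
      · simp [hvu, hvQ, hp.2.1 v hvQ hvu]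
      · simp [hvu, hvQ]
  · intro p' hp'
    simp only [For, Finset.mem_filter, Finset.mem_univ, true_and] at hp'
    funext v
    by_cases hvQ : v ∈ Q
    · simp [hvQ, hp'.2 v (by simp [hvQ])]
    · have hvu : v ≠ u := fun e => hvQ (e ▸ P.uQ)
      simp [hvQ, hvu]
  · intro p hp
    simp only [For, Finset.mem_filter, Finset.mem_univ, true_and] at hp
    obtain ⟨⟨_, hn⟩, hq, hu⟩ := hp
    rw [pv_split P hq hn (fun y hy => hx y (hu ▸ hy)), pow_succ, mul_comm]

/-- The product formula for the path sums. -/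
def Bf (N : ℚ) (t : ℚ) : ℕ → ℚ
  | 0 => 1
  | k + 1 => ((N - (k + 1)) * t + (k + 1)) * Bf N t k

/-- The product formula for forest sums. -/
def Af (N : ℚ) (t : ℚ) : ℕ → ℚ
  | 0 => 1
  | k + 1 => (N - (k + 1)) * t * Bf N t k

theorem sum_path (t : ℚ) (D : Finset α)
    (IH : ∀ D' : Finset α, D'.card < D.card →
      ∑ p ∈ For D', t ^ (PV D' p).card = Af ((Fintype.card α : ℚ) + 1) t D'.card) :
    ∀ (k : ℕ) (Q : Finset α) (m u : α) (q : α → Option α) (h : α → ℕ),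
      Pre D Q m u q h → (D \ Q).card = k →
      (∑ p ∈ For D with (∀ y ∈ Q, y ≠ u → p y = q y), t ^ (PV D p).card)
        = t * ((Fintype.card α : ℚ) + 1 - D.card) * Bf ((Fintype.card α : ℚ) + 1) t k := by
  classical
  intro k
  induction k using Nat.strong_induction_on with
  | _ k ih =>
  intro Q m u q h P hk
  rw [← Finset.sum_fiberwise _ (fun p => p u)]
  simp only [Finset.filter_filter]
  have hQpos : 0 < Q.card := Finset.card_pos.2 ⟨_, P.mQ⟩
  have hcard : (D \ Q).card + Q.card = D.card := Finset.card_sdiff_add_card_eq_card P.QD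
  have hterm : ∀ x : Option α, (∀ y, x = some y → y ∉ D) →
      (∑ p ∈ For D with (∀ y ∈ Q, y ≠ u → p y = q y) ∧ p u = x, t ^ (PV D p).card)
        = t * Af ((Fintype.card α : ℚ) + 1) t k := by
    intro x hx
    rw [sum_terminal P hx, IH (D \ Q) (by omega), hk]
  have hcyc : ∀ x ∈ Q,
      (∑ p ∈ For D with (∀ y ∈ Q, y ≠ u → p y = q y) ∧ p u = some x, t ^ (PV D p).card) = 0 := by
    intro x hx
    apply Finset.sum_eq_zero
    intro p hp
    exfalso
    simp only [For, Finset.mem_filter, Finset.mem_univ, true_and] at hp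
    exact no_cycle hp.1.1 hp.2.2 (P.reach_u hp.2.1 (h x) x hx le_rfl)
  have hext : ∀ x ∈ D \ Q,
      (∑ p ∈ For D with (∀ y ∈ Q, y ≠ u → p y = q y) ∧ p u = some x, t ^ (PV D p).card)
        = t * ((Fintype.card α : ℚ) + 1 - D.card) * Bf ((Fintype.card α : ℚ) + 1) t (k - 1) := by
    intro x hx
    have hkpos : 0 < (D \ Q).card := Finset.card_pos.2 ⟨_, hx⟩
    have hx' := Finset.mem_sdiff.1 hx
    have hk' : (D \ insert x Q).card = k - 1 := by
      rw [Finset.sdiff_insert, Finset.card_erase_of_mem hx, hk]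
    rw [← ih (k - 1) (by omega) _ _ _ _ _ (P.extend hx'.1 hx'.2) hk']
    congr 1
    apply Finset.filter_congr
    intro p _
    constructor
    · rintro ⟨h1, h2⟩ y hy hyx
      by_cases hyu : y = u
      · subst hyu; simp [h2]
      · rw [Function.update_of_ne hyu]
        exact h1 y ((Finset.mem_insert.1 hy).resolve_left hyx) hyu
    · intro h1
      have hux : u ≠ x := fun e => hx'.2 (e ▸ P.uQ)
      refine ⟨?_, ?_⟩
      · intro y hy hyu
        have := h1 y (Finset.mem_insert_of_mem hy) (fun e => hx'.2 (e ▸ hy))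
        rwa [Function.update_of_ne hyu] at this
      · simpa using h1 u (Finset.mem_insert_of_mem P.uQ) hux
  rw [Fintype.sum_option, hterm none (by simp), ← Finset.sum_add_sum_compl D,
    ← Finset.sum_sdiff P.QD, Finset.sum_congr rfl hext, Finset.sum_congr rfl hcyc,
    Finset.sum_congr rfl (fun x hx => hterm (some x) (by
      rintro y ⟨⟩; exact Finset.mem_compl.1 hx))]
  simp only [Finset.sum_const, Finset.card_compl, nsmul_eq_mul, hk, mul_zero, add_zero]
  rw [Nat.cast_sub (Finset.card_le_univ D)]
  cases k with
  | zero => simp [Af, Bf]; ring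
  | succ k => simp only [Af, Bf, Nat.add_sub_cancel]; push_cast; ring

theorem sum_forest (t : ℚ) : ∀ (k : ℕ) (D : Finset α), D.card = k →
    ∑ p ∈ For D, t ^ (PV D p).card = Af ((Fintype.card α : ℚ) + 1) t k := by
  classical
  intro k
  induction k using Nat.strong_induction_on with
  | _ k ih =>
  intro D hD
  rcases D.eq_empty_or_nonempty with rfl | hne
  · simp only [Finset.card_empty] at hD
    subst hD
    have : (For (∅ : Finset α)) = {fun _ => none} := by
      ext p
      simp only [For, Finset.mem_filter, Finset.mem_univ, true_and, Finset.mem_singleton]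
      constructor
      · rintro ⟨_, h⟩
        funext v
        exact h v (by simp)
      · rintro rfl
        exact ⟨fs_of_rank _ (fun _ => 0) (by simp), by simp⟩
    rw [this]
    simp [PV, Af]
  · have P : Pre D {D.min' hne} (D.min' hne) (D.min' hne) (fun _ => none) (fun _ => 0) :=
      ⟨fun v hv => D.min'_le v hv, by simp, by simp, by simp [D.min'_mem hne],
        by simp, by
          intro y hy
          rw [Finset.mem_singleton] at hy
          subst hy; exact .refl⟩
    have hpos := Finset.card_pos.2 hne
    obtain ⟨k, rfl⟩ : ∃ j, k = j + 1 := ⟨k - 1, by omega⟩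
    have hs := sum_path t D (fun D' h' => ih D'.card (by omega) D' rfl) k _ _ _ _ _ P (by
      rw [Finset.sdiff_singleton_eq_erase, Finset.card_erase_of_mem (D.min'_mem hne)]; omega)
    rw [Finset.filter_true_of_mem (by simp)] at hs
    rw [hs, hD, Af]
    push_cast
    ring

theorem Bf_eq (N t : ℚ) (k : ℕ) :
    Bf N t k = ∏ j ∈ Finset.range k, ((N - (j + 1)) * t + (j + 1)) := by
  induction k with
  | zero => simp [Bf]
  | succ k ih => rw [Finset.prod_range_succ, Bf, ih, mul_comm]

end ForestAux

/-- For `n ≥ 1`, the polynomial `f_n(t) = Σ_{F ∈ ℱ_n} t^{pv(F)}` is given by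
`f_n(t) = t · Π_{i=1}^{n−1} ((i+1)·t + (n − i))`. -/
theorem forest_poly (n : ℕ) (hn : 1 ≤ n) (t : ℚ) :
    (∑ᶠ F : Fo n, t ^ pvF F.1) =
      t * ∏ i ∈ Finset.Icc 1 (n - 1), (((i : ℚ) + 1) * t + ((n - i : ℕ) : ℚ)) := by
  classical
  let _ : LinearOrder (Vn n) := inferInstanceAs (LinearOrder {v : ℕ // v ∈ Finset.Icc 1 n})
  let _ : Fintype (Vn n) := inferInstanceAs (Fintype {v : ℕ // v ∈ Finset.Icc 1 n})
  have hcard : Fintype.card (Vn n) = n := by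
    rw [← Nat.card_eq_fintype_card]
    exact (Nat.card_eq_fintype_card (α := Finset.Icc 1 n)).trans
      ((Fintype.card_coe (Finset.Icc 1 n)).trans (by simp))
  have hfin : Finite (Fo n) :=
    inferInstanceAs (Finite {p : Vn n → Option (Vn n) // IsForest p})
  let _ : Fintype (Fo n) := Fintype.ofFinite _
  rw [finsum_eq_sum_of_fintype]
  have hmain := ForestAux.sum_forest (α := Vn n) t n Finset.univ
    (by rw [Finset.card_univ, hcard])
  have hpv : ∀ p : Vn n → Option (Vn n),
      pvF p = (ForestAux.PV Finset.univ p).card := by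
    intro p
    unfold pvF
    rw [← Set.ncard_coe_finset]
    congr 1
    ext v
    simp only [ForestAux.PV, Finset.coe_filter, Finset.mem_univ, true_and, Set.mem_ofPred_eq]
    rfl
  have hsum : (∑ F : Fo n, t ^ pvF F.1) =
      ∑ p ∈ ForestAux.For Finset.univ, t ^ (ForestAux.PV (Finset.univ : Finset (Vn n)) p).card := by
    simp only [hpv]
    refine (Finset.sum_subtype (p := fun p : Vn n → Option (Vn n) => IsForest p)
      (ForestAux.For Finset.univ) ?_
      (fun p => t ^ (ForestAux.PV (Finset.univ : Finset (Vn n)) p).card)).symm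
    intro p
    simp only [ForestAux.For, Finset.mem_filter, Finset.mem_univ, true_and, not_true_eq_false,
      false_imp_iff, implies_true, and_true]
    rfl
  rw [hsum, hmain, hcard]
  obtain ⟨k, rfl⟩ : ∃ k, n = k + 1 := ⟨n - 1, by omega⟩
  rw [ForestAux.Af, ForestAux.Bf_eq, Nat.add_sub_cancel, ← Finset.prod_range_reflect,
    ← Finset.Ico_succ_right_eq_Icc, Finset.prod_Ico_eq_prod_range]
  have h1 : ((k + 1 : ℕ) : ℚ) + 1 - ((k : ℚ) + 1) = 1 := by push_cast; ring
  rw [h1, one_mul]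
  congr 1
  apply Finset.prod_congr (by simp)
  intro j hj
  have hj' : j < k := by simpa using hj
  obtain ⟨d, rfl⟩ : ∃ d, k = j + 1 + d := ⟨k - (j + 1), by omega⟩
  have e1 : j + 1 + d - 1 - j = d := by omega
  have e2 : j + 1 + d + 1 - (1 + j) = d + 1 := by omega
  rw [e1, e2]
  push_cast
  ring
end

section
/- For every n ≥ 1, the polynomial p_n(t) = Σ_{P ∈ 𝒫ℱ_n} t^{pv(P)} satisfies p_n(t) = t · Π_{i=1}^{n−1} ((2i+1)·t + (n − i)). -/
/-- Labeled plane trees: a root label together with a linearly ordered list of subtrees. -/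
inductive PT : Type
  | node (label : ℕ) (children : List PT) : PT

/-- The multiset of labels of a plane tree. -/
def PT.labels : PT → Multiset ℕ
  | .node a ch => a ::ₘ (ch.attach.map fun c => PT.labels c.1).sum
decreasing_by
  have := List.sizeOf_lt_of_mem c.2
  simp only [PT.node.sizeOf_spec]
  omega

/-- The number of *proper* vertices of a plane tree: a vertex is proper if its label is
the smallest label in its descendant subtree (including itself). -/
def PT.pv : PT → ℕ
  | .node a ch =>
      (if ∀ b ∈ (ch.map PT.labels).sum, a ≤ b then 1 else 0)
        + (ch.attach.map fun c => PT.pv c.1).sum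
decreasing_by
  have := List.sizeOf_lt_of_mem c.2
  simp only [PT.node.sizeOf_spec]
  omega

/-- `𝒫ℱ_n`: plane forests on `[n]`, i.e. sequences of (nonempty) plane trees whose
label sets are disjoint with union `[n] = {1,…,n}`. -/
def PF (n : ℕ) : Type :=
  {l : List PT // (l.map PT.labels).sum = (Finset.Icc 1 n).val}

/-- The number of proper vertices of a plane forest. -/
def pvPF (l : List PT) : ℕ := (l.map PT.pv).sum

open Finset in
/-- The numbers defined by the structural recursion of plane forests. -/
def pnum (t : ℚ) : ℕ → ℚ
  | 0 => 1
  | n + 1 => ∑ k : Fin (n + 1), ((n + 1).choose (k.1 + 1) : ℚ) * ((t + k.1) * pnum t k.1 * pnum t (n - k.1))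
decreasing_by
  · exact k.2
  · omega

lemma pnum_succ (t : ℚ) (n : ℕ) : pnum t (n + 1) = ∑ k ∈ Finset.range (n + 1),
    ((n + 1).choose (k + 1) : ℚ) * ((t + k) * pnum t k * pnum t (n - k)) := by
  rw [pnum]
  exact Fin.sum_univ_eq_sum_range
    (fun k => ((n + 1).choose (k + 1) : ℚ) * ((t + k) * pnum t k * pnum t (n - k))) (n + 1)

/-- EGF of plane forests. -/
noncomputable def Pser (t : ℚ) : PowerSeries ℚ := PowerSeries.mk fun n => pnum t n / n.factorial

/-- EGF of plane trees. -/
noncomputable def Tser (t : ℚ) : PowerSeries ℚ :=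
  PowerSeries.mk fun n => (t + (n - 1 : ℕ)) * (if n = 0 then 0 else pnum t (n - 1)) / n.factorial

lemma Pser_eq (t : ℚ) : Pser t = 1 + Tser t * Pser t := by
  ext n
  rw [map_add, PowerSeries.coeff_mul, Finset.Nat.sum_antidiagonal_eq_sum_range_succ_mk]
  simp only [Pser, Tser, PowerSeries.coeff_mk, PowerSeries.coeff_one]
  cases n with
  | zero => simp [pnum]
  | succ n =>
    rw [Finset.sum_range_succ', pnum_succ, Finset.sum_div]
    simp only [Nat.add_sub_cancel, Nat.add_sub_add_right]
    simp
    refine Finset.sum_congr rfl fun k hk => ?_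
    have hk' : k + 1 ≤ n + 1 := by simpa [Nat.lt_succ_iff] using hk
    rw [Nat.cast_choose ℚ hk', Nat.add_sub_add_right]
    have h1 := Nat.factorial_ne_zero (k+1)
    have h2 := Nat.factorial_ne_zero (n-k)
    have h3 := Nat.factorial_ne_zero (n+1)
    field_simp

open PowerSeries in
lemma Tser_deriv (t : ℚ) : d⁄dX ℚ (Tser t) = C t * Pser t + X * d⁄dX ℚ (Pser t) := by
  ext n
  rw [map_add, coeff_C_mul, coeff_derivative]
  cases n with
  | zero => simp [Pser, Tser]
  | succ n =>
    rw [coeff_succ_X_mul, coeff_derivative]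
    simp only [Pser, Tser, coeff_mk, Nat.add_sub_cancel]
    rw [Nat.factorial_succ (n+1)]
    have h1 := Nat.factorial_ne_zero (n+1)
    push_cast
    field_simp

open PowerSeries in
lemma Pser_deriv (t : ℚ) : d⁄dX ℚ (Pser t) = C t * Pser t ^ 3 + X * (Pser t ^ 2 * d⁄dX ℚ (Pser t)) := by
  have h := Pser_eq t
  have h1 : d⁄dX ℚ (Pser t) = Tser t * d⁄dX ℚ (Pser t) + Pser t * d⁄dX ℚ (Tser t) := by
    conv_lhs => rw [h]
    simp [Derivation.leibniz]
  have h2 := Tser_deriv t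
  rw [h2] at h1
  linear_combination (Pser t) * h1 - d⁄dX ℚ (Pser t) * h

open PowerSeries in
lemma Pser_pow_deriv (t : ℚ) (s : ℕ) : C (s + 3 : ℚ) * d⁄dX ℚ (Pser t ^ (s + 1)) =
    C (s + 1 : ℚ) * (C ((s + 3) * t) * Pser t ^ (s + 3) + X * d⁄dX ℚ (Pser t ^ (s + 3))) := by
  have h := Pser_deriv t
  rw [Derivation.leibniz_pow, Derivation.leibniz_pow]
  simp only [Nat.add_sub_cancel, nsmul_eq_mul, smul_eq_mul, map_add, map_mul, map_natCast, map_one, map_ofNat,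
    show s + 3 - 1 = s + 2 from rfl]
  push_cast
  linear_combination ((s:PowerSeries ℚ) + 3) * (s + 1) * Pser t ^ s * h

open PowerSeries in
lemma coeff_rec (t : ℚ) (s n : ℕ) : (s + 3 : ℚ) * (coeff (n + 1) (Pser t ^ (s + 1)) * (n + 1)) =
    (s + 1) * (((s + 3) * t + n) * coeff n (Pser t ^ (s + 3))) := by
  have h := congrArg (coeff n) (Pser_pow_deriv t s)
  rw [coeff_C_mul, coeff_C_mul, map_add, coeff_C_mul, coeff_derivative] at h
  rw [h]
  cases n with
  | zero => simp
  | succ n =>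
    rw [coeff_succ_X_mul, coeff_derivative]
    push_cast
    ring

open PowerSeries in
lemma coeff_closed (t : ℚ) (n : ℕ) : ∀ s : ℕ, coeff (n + 1) (Pser t ^ (s + 1)) * (n + 1).factorial =
    (s + 1) * t * ∏ i ∈ Finset.range n, ((2 * i + s + 3) * t + (n - i)) := by
  induction n with
  | zero =>
    intro s
    have h := coeff_rec t s 0
    have h0 : coeff 0 (Pser t ^ (s + 3)) = 1 := by
      simp [Pser, pnum]
    rw [h0] at h
    have : (s + 3 : ℚ) ≠ 0 := by positivity
    apply mul_left_cancel₀ this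
    simp only [Nat.cast_zero, zero_add, mul_one, add_zero, Nat.factorial_one, Nat.cast_one, Finset.range_zero, Finset.prod_empty] at h ⊢
    linear_combination h
  | succ n ih =>
    intro s
    have h := coeff_rec t s (n + 1)
    have h2 := ih (s + 2)
    have : (s + 3 : ℚ) ≠ 0 := by positivity
    apply mul_left_cancel₀ this
    rw [Finset.prod_range_succ', Nat.factorial_succ]
    have e : ∏ k ∈ Finset.range n, ((2 * ((k + 1 : ℕ) : ℚ) + s + 3) * t + (((n + 1 : ℕ) : ℚ) - (k + 1 : ℕ)))
      = ∏ i ∈ Finset.range n, ((2 * (i:ℚ) + (s + 2 : ℕ) + 3) * t + (n - i)) := by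
      refine Finset.prod_congr rfl fun k _ => ?_
      push_cast; ring
    rw [e]
    push_cast at h h2 ⊢
    linear_combination ((n+1).factorial : ℚ) * h + (s + 1 : ℚ) * ((s + 3) * t + (n + 1)) * h2

lemma pnum_closed (t : ℚ) (n : ℕ) : pnum t (n + 1) =
    t * ∏ i ∈ Finset.range n, ((2 * i + 3) * t + (n - i)) := by
  have h := coeff_closed t n 0
  have := Nat.factorial_ne_zero (n+1)
  simp [Pser] at h
  rw [← h]
  field_simp

/-- labels of a forest -/
def flab (l : List PT) : Multiset ℕ := (l.map PT.labels).sum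

lemma labels_node (a : ℕ) (ch : List PT) : (PT.node a ch).labels = a ::ₘ flab ch := by
  rw [PT.labels, flab]
  congr 2
  exact List.attach_map_val (f := PT.labels)

lemma pv_node (a : ℕ) (ch : List PT) :
    (PT.node a ch).pv = (if ∀ b ∈ flab ch, a ≤ b then 1 else 0) + pvPF ch := by
  rw [PT.pv, pvPF]
  congr 2
  exact List.attach_map_val (f := PT.pv)

lemma flab_nil : flab [] = 0 := rfl

lemma flab_cons (a : ℕ) (ch r : List PT) : flab (PT.node a ch :: r) = (a ::ₘ flab ch) + flab r := by
  rw [← labels_node]; simp [flab]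

lemma pvPF_cons (a : ℕ) (ch r : List PT) : pvPF (PT.node a ch :: r) =
    (if ∀ b ∈ flab ch, a ≤ b then 1 else 0) + pvPF ch + pvPF r := by
  rw [← pv_node]; simp [pvPF]

/-- Decomposition of a nonempty forest on a set `S`. -/
lemma flab_cons_iff (S : Finset ℕ) (a : ℕ) (ch r : List PT) :
    flab (PT.node a ch :: r) = S.val ↔
      ∃ B ⊆ S, a ∈ B ∧ flab ch = (B.erase a).val ∧ flab r = (S \ B).val := by
  rw [flab_cons]
  constructor
  · intro h
    have hn : ((a ::ₘ flab ch) + flab r).Nodup := h ▸ S.nodup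
    have hB : (a ::ₘ flab ch).Nodup := (Multiset.nodup_add.1 hn).1
    refine ⟨⟨a ::ₘ flab ch, hB⟩, ?_, ?_, ?_, ?_⟩
    · rw [← Finset.val_le_iff, ← h]; exact Multiset.le_add_right _ _
    · simp
    · rw [Finset.erase_val]; exact (Multiset.erase_cons_head _ _).symm
    · rw [Finset.sdiff_val, ← h]; simp
  · rintro ⟨B, hB, ha, h1, h2⟩
    rw [h1, h2, Finset.erase_val, Multiset.cons_erase (by simpa using ha), Finset.sdiff_val]
    exact add_tsub_cancel_of_le (Finset.val_le_iff.2 hB)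

lemma flab_eq_zero (l : List PT) : flab l = 0 ↔ l = [] := by
  cases l with
  | nil => simp [flab_nil]
  | cons x r => cases x; simp [flab_cons]

lemma finite_forests (n : ℕ) : ∀ S : Finset ℕ, S.card = n → {l | flab l = S.val}.Finite := by
  induction n using Nat.strong_induction_on with
  | _ n ih =>
    intro S hS
    have key : {l | flab l = S.val} ⊆ {[]} ∪ ⋃ B ∈ S.powerset, ⋃ a ∈ B,
        Set.image2 (fun ch r => PT.node a ch :: r) {l | flab l = (B.erase a).val}
          {l | flab l = (S \ B).val} := by
      rintro l hl
      cases l with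
      | nil => simp
      | cons x r =>
        obtain ⟨a, ch⟩ := x
        obtain ⟨B, hB, ha, h1, h2⟩ := (flab_cons_iff S a ch r).1 hl
        right
        simp only [Set.mem_iUnion]
        exact ⟨B, Finset.mem_powerset.2 hB, a, ha, ch, h1, r, h2, rfl⟩
    refine Set.Finite.subset ?_ key
    refine (Set.finite_singleton _).union (Set.Finite.biUnion (Finset.finite_toSet _) fun B hB => 
      Set.Finite.biUnion (Finset.finite_toSet _) fun a ha => ?_)
    have hB' : B ⊆ S := by simpa using hB
    have ha' : a ∈ B := by simpa using ha
    have c1 := Finset.card_le_card hB'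
    have c2 := Finset.card_erase_lt_of_mem ha'
    have c3 := Finset.card_sdiff_add_card_eq_card hB'
    exact Set.Finite.image2 _ (ih _ (by omega) _ rfl) (ih _ (by omega) _ rfl)

/-- The finset of forests on `S`. -/
noncomputable def FF (S : Finset ℕ) : Finset (List PT) := (finite_forests _ S rfl).toFinset

lemma mem_FF (S : Finset ℕ) (l : List PT) : l ∈ FF S ↔ flab l = S.val := by
  simp [FF]

/-- The weight sum. -/
noncomputable def WW (t : ℚ) (S : Finset ℕ) : ℚ := ∑ l ∈ FF S, t ^ pvPF l

lemma WW_rec (t : ℚ) (S : Finset ℕ) (hS : S.Nonempty) : WW t S =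
    ∑ B ∈ S.powerset, ∑ a ∈ B, (if ∀ b ∈ B.erase a, a ≤ b then t else 1) *
      (WW t (B.erase a) * WW t (S \ B)) := by
  have e : ∀ A D : Finset ℕ, WW t A * WW t D =
      ∑ x ∈ FF A ×ˢ FF D, t ^ pvPF x.1 * t ^ pvPF x.2 := by
    intro A D
    rw [WW, WW, Finset.sum_mul_sum, Finset.sum_product]
  simp only [e, Finset.mul_sum]
  rw [WW]
  rw [Finset.sum_sigma', Finset.sum_sigma']
  symm
  refine Finset.sum_bij (fun x _ => PT.node x.1.2 x.2.1 :: x.2.2) ?_ ?_ ?_ ?_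
  · rintro ⟨⟨B, a⟩, ch, r⟩ h
    simp only [Finset.mem_sigma, Finset.mem_product, Finset.mem_powerset, mem_FF] at h ⊢
    exact (flab_cons_iff S a ch r).2 ⟨B, h.1.1, h.1.2, h.2.1, h.2.2⟩
  · rintro ⟨⟨B, a⟩, ch, r⟩ h ⟨⟨B', a'⟩, ch', r'⟩ h' e
    simp only [Finset.mem_sigma, Finset.mem_product, Finset.mem_powerset, mem_FF] at h h'
    simp only [List.cons.injEq, PT.node.injEq] at e
    obtain ⟨⟨rfl, rfl⟩, rfl⟩ := e
    have : B.erase a = B'.erase a := Finset.val_injective (h.2.1.symm.trans h'.2.1)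
    have : B = B' := by
      rw [← Finset.insert_erase h.1.2, this, Finset.insert_erase h'.1.2]
    subst this
    rfl
  · intro l hl
    rw [mem_FF] at hl
    cases l with
    | nil =>
      exfalso
      rw [flab_nil] at hl
      exact hS.ne_empty (Finset.val_eq_zero.1 hl.symm)
    | cons x r =>
      obtain ⟨a, ch⟩ := x
      obtain ⟨B, hB, ha, h1, h2⟩ := (flab_cons_iff S a ch r).1 hl
      refine ⟨⟨⟨B, a⟩, ch, r⟩, ?_, rfl⟩
      simp only [Finset.mem_sigma, Finset.mem_product, Finset.mem_powerset, mem_FF]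
      exact ⟨⟨hB, ha⟩, h1, h2⟩
  · rintro ⟨⟨B, a⟩, ch, r⟩ h
    simp only [Finset.mem_sigma, Finset.mem_product, Finset.mem_powerset, mem_FF] at h
    simp only [pvPF_cons, h.2.1, Finset.mem_val]
    split_ifs <;> ring

lemma sum_min (t : ℚ) (B : Finset ℕ) (hB : B.Nonempty) :
    ∑ a ∈ B, (if ∀ b ∈ B.erase a, a ≤ b then t else 1) = t + (B.card - 1 : ℕ) := by
  have hm := B.min'_mem hB
  rw [← Finset.add_sum_erase _ _ hm, if_pos]
  · congr 1
    rw [← Finset.card_erase_of_mem hm, Finset.card_eq_sum_ones, Nat.cast_sum]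
    refine Finset.sum_congr rfl fun a ha => ?_
    rw [if_neg]
    · simp
    · intro h
      have ha' := Finset.mem_erase.1 ha
      have h1 := h _ (Finset.mem_erase.2 ⟨ha'.1.symm, hm⟩)
      exact ha'.1 (le_antisymm h1 (B.min'_le _ ha'.2))
  · intro b hb
    exact B.min'_le _ (Finset.mem_of_mem_erase hb)

lemma WW_eq (t : ℚ) (n : ℕ) : ∀ S : Finset ℕ, S.card = n → WW t S = pnum t n := by
  induction n using Nat.strong_induction_on with
  | _ n ih =>
    intro S hS
    cases n with
    | zero =>
      rw [Finset.card_eq_zero] at hS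
      subst hS
      have : FF ∅ = {[]} := by
        ext l; simp [mem_FF, flab_eq_zero]
      simp [WW, this, pnum, pvPF]
    | succ n =>
      have hne : S.Nonempty := by rw [← Finset.card_pos]; omega
      rw [WW_rec t S hne]
      have : ∀ B ∈ S.powerset, (∑ a ∈ B, (if ∀ b ∈ B.erase a, a ≤ b then t else 1) *
          (WW t (B.erase a) * WW t (S \ B))) =
          (fun m : ℕ => if m = 0 then 0 else (t + (m - 1 : ℕ)) * pnum t (m - 1) * pnum t (n + 1 - m)) B.card := by
        intro B hB
        have hB' : B ⊆ S := by simpa using hB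
        rcases B.eq_empty_or_nonempty with rfl | hBn
        · simp
        have c0 := Finset.card_pos.2 hBn
        have c1 := Finset.card_le_card hB'
        have c3 := Finset.card_sdiff_add_card_eq_card hB'
        simp only [if_neg c0.ne']
        rw [← sum_min t B hBn, mul_assoc, Finset.sum_mul]
        refine Finset.sum_congr rfl fun a ha => ?_
        rw [ih (B.card - 1) (by omega) _ (Finset.card_erase_of_mem ha),
          ih (n + 1 - B.card) (by omega) _ (by omega)]
      rw [Finset.sum_congr rfl this, Finset.sum_powerset_apply_card (fun m : ℕ => if m = 0 then 0 else (t + (m - 1 : ℕ)) * pnum t (m - 1) * pnum t (n + 1 - m)), hS, Finset.sum_range_succ', pnum_succ]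
      simp

/-- For `n ≥ 1`, the polynomial `p_n(t) = Σ_{P ∈ 𝒫ℱ_n} t^{pv(P)}` is given by
`p_n(t) = t · Π_{i=1}^{n-1} ((2i+1)·t + (n-i))`. -/
theorem planeForest_poly (n : ℕ) (hn : 1 ≤ n) (t : ℚ) :
    (∑ᶠ F : PF n, t ^ pvPF F.1) =
      t * ∏ i ∈ Finset.Icc 1 (n - 1), ((2 * i + 1 : ℕ) * t + ((n - i : ℕ) : ℚ)) := by
  have h1 : (∑ᶠ F : PF n, t ^ pvPF F.1) = WW t (Finset.Icc 1 n) := by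
    have h2 := finsum_mem_coe_finset (fun l => t ^ pvPF l) (FF (Finset.Icc 1 n))
    rw [WW, ← h2, ← finsum_set_coe_eq_finsum_mem]
    refine finsum_comp_equiv (Equiv.subtypeEquivRight (fun l => ?_)) (f := fun F : (↑(FF (Finset.Icc 1 n)) : Set (List PT)) => t ^ pvPF F.1)
    rw [Finset.mem_coe, mem_FF]
    rfl
  obtain ⟨m, rfl⟩ : ∃ m, n = m + 1 := ⟨n - 1, by omega⟩
  rw [h1, WW_eq t (m + 1) _ (by simp), pnum_closed, Nat.add_sub_cancel]
  congr 1
  rw [← Finset.Ico_add_one_right_eq_Icc, Finset.prod_Ico_eq_prod_range, Nat.add_sub_cancel]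
  refine Finset.prod_congr rfl fun i hi => ?_
  have hi' := Finset.mem_range.1 hi
  rw [show m + 1 - (1 + i) = m - i by omega, Nat.cast_sub hi'.le]
  push_cast
  ring
end

section
/- For every n ≥ 1, Σ_{T ∈ 𝒯_{n+1}} t^{pv(T)} = t · Π_{i=0}^{n−1} ((i+1)·t + (n − i)) as polynomials in t, where 𝒯_{n+1} is the set of rooted trees on [n+1]; in particular, setting t = 1 gives |𝒯_{n+1}| = (n+1)^n. -/
/-- `𝒯_m`: the rooted trees on `[m]`, i.e. forests with exactly one root
(equivalently, connected forests). -/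
def Tr (m : ℕ) : Type :=
  {p : Vn m → Option (Vn m) // IsForest p ∧ ∃! v : Vn m, p v = none}

namespace TreePoly

/-- `w` reaches `v` by following parents. -/
def Reach {V : Type} (p : V → Option V) (w v : V) : Prop :=
  Relation.ReflTransGen (fun x y => p x = some y) w v

def IsF {V : Type} (p : V → Option V) : Prop := WellFounded fun a b => p b = some a

def Prp {V : Type} [LinearOrder V] (p : V → Option V) (v : V) : Prop :=
  ∀ w, Reach p w v → v ≤ w

open Classical in
/-- forests with root set exactly `L` -/
noncomputable def FS {V : Type} [LinearOrder V] [Fintype V] (L : Finset V) :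
    Finset (V → Option V) :=
  Finset.univ.filter fun p => IsF p ∧ ∀ v, p v = none ↔ v ∈ L

open Classical in
noncomputable def wt {V : Type} [LinearOrder V] [Fintype V] (t : ℚ) (L : Finset V)
    (p : V → Option V) : ℚ := ∏ v ∈ Lᶜ, if Prp p v then t else 1

noncomputable def A {V : Type} [LinearOrder V] [Fintype V] (t : ℚ) (L : Finset V) : ℚ :=
  ∑ p ∈ FS L, wt t L p

open Classical in
noncomputable def B {V : Type} [LinearOrder V] [Fintype V] (t : ℚ) (L : Finset V) (m y : V) : ℚ :=
  ∑ p ∈ (FS L).filter (fun p => Reach p m y), wt t L p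

theorem mem_FS {V : Type} [LinearOrder V] [Fintype V] {L : Finset V} {p : V → Option V} :
    p ∈ FS L ↔ IsF p ∧ ∀ v, p v = none ↔ v ∈ L := by
  simp [FS]

theorem Reach.total {V : Type} {p : V → Option V} {w a b : V} (h1 : Reach p w a)
    (h2 : Reach p w b) : Reach p a b ∨ Reach p b a := by
  refine Relation.ReflTransGen.total_of_right_unique ?_ h1 h2
  intro a b c h1 h2
  rw [h1] at h2
  exact Option.some.inj h2

theorem Reach.root {V : Type} {p : V → Option V} {a b : V} (h : Reach p a b)
    (ha : p a = none) : a = b := by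
  rcases Relation.ReflTransGen.cases_head h with h | ⟨c, hc, _⟩
  · exact h
  · rw [ha] at hc; cases hc

theorem exists_root {V : Type} {p : V → Option V} (hp : IsF p) (w : V) :
    ∃ y, p y = none ∧ Reach p w y := by
  induction w using hp.induction with
  | _ w ih =>
    cases h : p w with
    | none => exact ⟨w, h, Relation.ReflTransGen.refl⟩
    | some a =>
      obtain ⟨y, hy, hr⟩ := ih a h
      exact ⟨y, hy, Relation.ReflTransGen.head h hr⟩

theorem A_eq {V : Type} [LinearOrder V] [Fintype V] (t : ℚ) (L : Finset V) (m : V) :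
    A t L = ∑ y ∈ L, B t L m y := by
  classical
  unfold A B
  rw [← Finset.sum_biUnion]
  · apply Finset.sum_congr _ (fun _ _ => rfl)
    ext p
    simp only [Finset.mem_biUnion, Finset.mem_filter]
    constructor
    · intro hp
      obtain ⟨y, hy, hr⟩ := exists_root (mem_FS.1 hp).1 m
      exact ⟨y, ((mem_FS.1 hp).2 y).1 hy, hp, hr⟩
    · rintro ⟨y, _, hp, _⟩; exact hp
  · intro y hy y' hy' hne
    rw [Function.onFun, Finset.disjoint_left]
    intro p hp hp'
    simp only [Finset.mem_filter] at hp hp'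
    have h1 := ((mem_FS.1 hp.1).2 y).2 hy
    have h2 := ((mem_FS.1 hp.1).2 y').2 hy'
    rcases hp.2.total hp'.2 with h | h
    · exact hne (h.root h1)
    · exact hne (h.root h2).symm

open Classical in
theorem B_split {V : Type} [LinearOrder V] [Fintype V] (t : ℚ) (L : Finset V) (m y : V)
    (hm : m ∉ L) (hy : y ∈ L) :
    B t L m y = ∑ x ∈ Lᶜ, ∑ p ∈ (FS L).filter (fun p => p x = some y ∧ Reach p m x), wt t L p := by
  classical
  unfold B
  rw [← Finset.sum_biUnion]
  · apply Finset.sum_congr _ (fun _ _ => rfl)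
    ext p
    simp only [Finset.mem_biUnion, Finset.mem_filter, Finset.mem_compl]
    constructor
    · rintro ⟨hp, hr⟩
      rcases Relation.ReflTransGen.cases_tail hr with h | ⟨x, hx, hxy⟩
      · exact absurd (h ▸ hy) hm
      · refine ⟨x, ?_, hp, hxy, hx⟩
        intro hxL
        rw [((mem_FS.1 hp).2 x).2 hxL] at hxy
        cases hxy
    · rintro ⟨x, _, hp, hxy, hx⟩
      exact ⟨hp, Relation.ReflTransGen.tail hx hxy⟩
  · intro x hx x' hx' hne
    rw [Function.onFun, Finset.disjoint_left]
    intro p hp hp'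
    simp only [Finset.mem_filter] at hp hp'
    have hF := mem_FS.1 hp.1
    have key : ∀ a b : V, p a = some y → b ∈ Lᶜ → Reach p a b → a = b := by
      intro a b ha hb h
      rcases Relation.ReflTransGen.cases_head h with h | ⟨c, hc, hcb⟩
      · exact h
      · rw [ha] at hc
        cases hc
        have := Reach.root hcb ((hF.2 y).2 hy)
        subst this
        simp [hy] at hb
    rcases hp.2.2.total hp'.2.2 with h | h
    · exact hne (key _ _ hp.2.1 hx' h)
    · exact hne (key _ _ hp'.2.1 hx h).symm

theorem update_reach {V : Type} [LinearOrder V] {p q : V → Option V} {x y : V}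
    (hpx : p x = some y) (hpy : p y = none) (hqx : q x = none) (h : ∀ v, v ≠ x → p v = q v)
    {w v : V} (hv : v ≠ y) : Reach p w v ↔ Reach q w v := by
  constructor
  · intro hr
    induction hr with
    | refl => exact Relation.ReflTransGen.refl
    | @tail b c _ hbc ih =>
      have hb : b ≠ y := by rintro rfl; rw [hpy] at hbc; cases hbc
      have hbx : b ≠ x := by rintro rfl; rw [hpx] at hbc; cases hbc; exact hv rfl
      exact Relation.ReflTransGen.tail (ih hb) (by rw [← h b hbx]; exact hbc)
  · intro hr
    clear hv
    induction hr with
    | refl => exact Relation.ReflTransGen.refl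
    | @tail a b _ hab ih =>
      have : a ≠ x := by rintro rfl; rw [hqx] at hab; cases hab
      exact Relation.ReflTransGen.tail ih (by rw [h a this]; exact hab)

theorem update_isF {V : Type} [LinearOrder V] {p q : V → Option V} {x y : V}
    (hpx : p x = some y) (hpy : p y = none) (hqx : q x = none) (h : ∀ v, v ≠ x → p v = q v) :
    IsF p ↔ IsF q := by
  constructor
  · intro hp
    refine Subrelation.wf ?_ hp
    intro a b hab
    have : b ≠ x := by rintro rfl; rw [hqx] at hab; cases hab
    rw [h b this]; exact hab
  · intro hq
    refine ⟨fun v => ?_⟩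
    induction v using hq.induction with
    | _ v ih =>
      refine ⟨_, fun a ha => ?_⟩
      by_cases hvx : v = x
      · subst hvx
        rw [hpx] at ha
        cases ha
        exact ⟨_, fun b hb => by rw [hpy] at hb; cases hb⟩
      · exact ih a (by rw [← h v hvx]; exact ha)

theorem update_wt {V : Type} [LinearOrder V] [Fintype V] (t : ℚ) {L : Finset V} {m y x : V}
    (hy : y ∈ L) (hmin : ∀ v, v ∉ L → m ≤ v) (hx : x ∉ L) {p q : V → Option V}
    (hpx : p x = some y) (hpL : ∀ v, p v = none ↔ v ∈ L) (hqx : q x = none)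
    (h : ∀ v, v ≠ x → p v = q v) (hr : Reach p m x) :
    wt t L p = (if x = m then t else 1) * wt t (insert x L) q := by
  classical
  unfold wt
  have hc : Lᶜ = insert x (insert x L)ᶜ := by
    ext v; simp only [Finset.mem_compl, Finset.mem_insert]
    by_cases hv : v = x
    · subst hv; simp [hx]
    · simp [hv]
  rw [hc, Finset.prod_insert (by simp)]
  congr 1
  · have : Prp p x ↔ x = m := by
      constructor
      · intro hP
        exact le_antisymm (hP m hr) (hmin x hx)
      · rintro rfl w hw
        apply hmin
        intro hwL
        exact hx ((hw.root ((hpL w).2 hwL)) ▸ hwL)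
    simp only [this]
  · apply Finset.prod_congr rfl
    intro v hv
    have hvy : v ≠ y := by rintro rfl; simp [hy] at hv
    have : Prp p v ↔ Prp q v := by
      unfold Prp
      simp only [update_reach hpx ((hpL y).2 hy) hqx h hvy]
    simp only [this]

open Classical in
theorem B_step {V : Type} [LinearOrder V] [Fintype V] (t : ℚ) {L : Finset V} {m y x : V}
    (hy : y ∈ L) (hmin : ∀ v, v ∉ L → m ≤ v) (hx : x ∉ L) :
    ∑ p ∈ (FS L).filter (fun p => p x = some y ∧ Reach p m x), wt t L p =
      (if x = m then t else 1) * B t (insert x L) m x := by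
  classical
  have hxy : y ≠ x := by rintro rfl; exact hx hy
  unfold B
  rw [Finset.mul_sum]
  refine Finset.sum_nbij' (fun p => Function.update p x none)
    (fun q => Function.update q x (some y)) ?_ ?_ ?_ ?_ ?_
  · intro p hp
    simp only [Finset.mem_filter, mem_FS] at hp ⊢
    obtain ⟨⟨hF, hL⟩, hpx, hr⟩ := hp
    have hh : ∀ v, v ≠ x → p v = Function.update p x none v := fun v hv => by simp [hv]
    refine ⟨⟨(update_isF hpx ((hL y).2 hy) (by simp) hh).1 hF, ?_⟩,
      (update_reach hpx ((hL y).2 hy) (by simp) hh hxy.symm).1 hr⟩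
    intro v
    by_cases hv : v = x
    · subst hv; simp
    · simp [hv, hL]
  · intro q hq
    simp only [Finset.mem_filter, mem_FS] at hq ⊢
    obtain ⟨⟨hF, hL⟩, hr⟩ := hq
    have hh : ∀ v, v ≠ x → Function.update q x (some y) v = q v := fun v hv => by simp [hv]
    have hpx : Function.update q x (some y) x = some y := by simp
    have hpy : Function.update q x (some y) y = none := by
      rw [hh y hxy, hL]; simp [hy]
    have hqx : q x = none := by rw [hL]; simp
    refine ⟨⟨(update_isF hpx hpy hqx hh).2 hF, ?_⟩, hpx,
      (update_reach hpx hpy hqx hh hxy.symm).2 hr⟩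
    intro v
    by_cases hv : v = x
    · subst hv; simp [hx]
    · simp [hv, hL]
  · intro p hp
    simp only [Finset.mem_filter, mem_FS] at hp
    simp [← hp.2.1]
  · intro q hq
    simp only [Finset.mem_filter, mem_FS] at hq
    have hqx : q x = none := by rw [hq.1.2]; simp
    simp [← hqx]
  · intro p hp
    simp only [Finset.mem_filter, mem_FS] at hp
    exact update_wt t hy hmin hx hp.2.1 hp.1.2 (by simp) (fun v hv => by simp [hv]) hp.2.2

theorem B_rec {V : Type} [LinearOrder V] [Fintype V] (t : ℚ) {L : Finset V} {m y : V}
    (hm : m ∉ L) (hy : y ∈ L) (hmin : ∀ v, v ∉ L → m ≤ v) :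
    B t L m y = t * A t (insert m L) + ∑ x ∈ Lᶜ.erase m, B t (insert x L) m x := by
  classical
  rw [B_split t L m y hm hy, ← Finset.add_sum_erase _ _ (Finset.mem_compl.2 hm)]
  congr 1
  · rw [B_step t hy hmin hm, if_pos rfl]
    congr 1
    unfold A B
    rw [Finset.filter_true_of_mem]
    intro p _
    exact Relation.ReflTransGen.refl
  · apply Finset.sum_congr rfl
    intro x hx
    rw [Finset.mem_erase, Finset.mem_compl] at hx
    rw [B_step t hy hmin hx.2, if_neg hx.1, one_mul]

theorem A_univ {V : Type} [LinearOrder V] [Fintype V] (t : ℚ) :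
    A t (Finset.univ : Finset V) = 1 := by
  classical
  have : FS (Finset.univ : Finset V) = {fun _ => none} := by
    ext p
    rw [mem_FS, Finset.mem_singleton]
    constructor
    · rintro ⟨_, h⟩; funext v; simp [h]
    · rintro rfl
      exact ⟨⟨fun a => ⟨_, fun b hb => by cases hb⟩⟩, by simp⟩
  simp [A, this, wt]

theorem B_formula {V : Type} [LinearOrder V] [Fintype V] (t : ℚ) (k : ℕ) :
    ∀ (L : Finset V) (m y : V), m ∉ L → y ∈ L → (∀ v, v ∉ L → m ≤ v) →
      L.card + k + 1 = Fintype.card V →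
      B t L m y = t * ∏ j ∈ Finset.range k,
        (((Fintype.card V : ℚ) - 1 - j) * t + ((j : ℚ) + 1)) := by
  classical
  induction k with
  | zero =>
    intro L m y hm hy hmin hc
    have h1 : insert m L = Finset.univ := by
      rw [← Finset.card_eq_iff_eq_univ, Finset.card_insert_of_notMem hm]; omega
    have h2 : Lᶜ.erase m = ∅ := by
      rw [← Finset.card_eq_zero, Finset.card_erase_of_mem (by simpa using hm),
        Finset.card_compl]; omega
    rw [B_rec t hm hy hmin, h1, h2, A_univ]; simp
  | succ k ih =>
    intro L m y hm hy hmin hc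
    rw [B_rec t hm hy hmin]
    have hci : ∀ x, x ∉ L → (insert x L).card + k + 1 = Fintype.card V := by
      intro x hx
      rw [Finset.card_insert_of_notMem hx]; omega
    have hne : ((insert m L)ᶜ).Nonempty := by
      rw [← Finset.card_pos, Finset.card_compl]
      have := hci m hm; omega
    set m' := ((insert m L)ᶜ).min' hne with hm'
    have hm'1 : m' ∉ insert m L := by
      have := Finset.min'_mem _ hne
      rwa [Finset.mem_compl] at this
    have hA : A t (insert m L) = ∑ z ∈ insert m L, t * ∏ j ∈ Finset.range k,
        (((Fintype.card V : ℚ) - 1 - j) * t + ((j : ℚ) + 1)) := by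
      rw [A_eq t _ m']
      apply Finset.sum_congr rfl
      intro z hz
      exact ih _ _ _ hm'1 hz (fun v hv => Finset.min'_le _ _ (Finset.mem_compl.2 hv)) (hci m hm)
    have hB : ∀ x ∈ Lᶜ.erase m, B t (insert x L) m x = t * ∏ j ∈ Finset.range k,
        (((Fintype.card V : ℚ) - 1 - j) * t + ((j : ℚ) + 1)) := by
      intro x hx
      rw [Finset.mem_erase, Finset.mem_compl] at hx
      refine ih _ _ _ ?_ (by simp) ?_ (hci x hx.2)
      · simp [hm, Ne.symm hx.1]
      · intro v hv
        simp only [Finset.mem_insert, not_or] at hv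
        exact hmin v hv.2
    rw [Finset.sum_congr rfl hB, hA, Finset.sum_const, Finset.sum_const,
      Finset.card_insert_of_notMem hm, Finset.card_erase_of_mem (by simpa using hm),
      Finset.card_compl, Finset.prod_range_succ]
    have e1 : Fintype.card V - L.card - 1 = k + 1 := by omega
    have e2 : (Fintype.card V : ℚ) = L.card + k + 2 := by
      rw [← hc]; push_cast; ring
    rw [e1]
    simp only [nsmul_eq_mul]
    generalize (∏ j ∈ Finset.range k,
        (((Fintype.card V : ℚ) - 1 - j) * t + ((j : ℚ) + 1))) = P
    rw [e2]
    push_cast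
    ring

theorem A_single {V : Type} [LinearOrder V] [Fintype V] (t : ℚ) (x : V) (k : ℕ)
    (hk : k + 2 = Fintype.card V) : A t {x} = t * ∏ j ∈ Finset.range k,
        (((Fintype.card V : ℚ) - 1 - j) * t + ((j : ℚ) + 1)) := by
  classical
  have hne : (({x} : Finset V)ᶜ).Nonempty := by
    rw [← Finset.card_pos, Finset.card_compl, Finset.card_singleton]
    omega
  rw [A_eq t _ ((({x} : Finset V)ᶜ).min' hne), Finset.sum_singleton]
  refine B_formula t k _ _ _ ?_ (by simp) ?_ (by simp; omega)
  · have := Finset.min'_mem _ hne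
    rwa [Finset.mem_compl] at this
  · exact fun v hv => Finset.min'_le _ _ (Finset.mem_compl.2 hv)

open Classical in
theorem tree_sum {V : Type} [LinearOrder V] [Fintype V] (t : ℚ) (k : ℕ)
    (hk : k + 2 = Fintype.card V) :
    ∑ p ∈ Finset.univ.filter (fun p : V → Option V => IsF p ∧ ∃! v, p v = none),
      t ^ (Set.ncard {v | Prp p v}) = t * ∏ j ∈ Finset.range (k + 1),
        (((Fintype.card V : ℚ) - 1 - j) * t + ((j : ℚ) + 1)) := by
  have hne : (Finset.univ : Finset V).Nonempty := by
    rw [← Finset.card_pos, Finset.card_univ]; omega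
  set m := (Finset.univ : Finset V).min' hne
  have hm : ∀ v, m ≤ v := fun v => Finset.min'_le _ _ (Finset.mem_univ v)
  have h1 : Finset.univ.filter (fun p : V → Option V => IsF p ∧ ∃! v, p v = none) =
      Finset.univ.biUnion (fun x : V => FS {x}) := by
    ext p
    simp only [Finset.mem_filter, Finset.mem_univ, true_and, Finset.mem_biUnion, mem_FS,
      Finset.mem_singleton]
    constructor
    · rintro ⟨hF, x, hx, hu⟩
      exact ⟨x, hF, fun v => ⟨hu v, fun h => h ▸ hx⟩⟩
    · rintro ⟨x, hF, h⟩
      exact ⟨hF, x, (h x).2 rfl, fun v => (h v).1⟩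
  rw [h1, Finset.sum_biUnion]
  · have h2 : ∀ x : V, ∑ p ∈ FS {x}, t ^ (Set.ncard {v | Prp p v}) =
        (if x = m then t else 1) * A t {x} := by
      intro x
      unfold A
      rw [Finset.mul_sum]
      apply Finset.sum_congr rfl
      intro p hp
      rw [mem_FS] at hp
      have hx : Prp p x ↔ x = m := by
        constructor
        · intro h
          refine le_antisymm (h m ?_) (hm x)
          obtain ⟨y, hy, hr⟩ := exists_root hp.1 m
          rw [hp.2, Finset.mem_singleton] at hy
          exact hy ▸ hr
        · rintro rfl w _
          exact hm w
      have h3 : t ^ (Set.ncard {v | Prp p v}) = ∏ v : V, if Prp p v then t else 1 := by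
        rw [Finset.prod_ite]
        simp only [Finset.prod_const, one_pow, mul_one]
        congr 1
        rw [Set.ncard_eq_toFinset_card']
        congr 1
        ext; simp
      rw [h3, ← Finset.prod_mul_prod_compl {x}, Finset.prod_singleton]
      simp only [hx, wt]
    simp only [h2, A_single t _ k hk]
    rw [← Finset.sum_mul, ← Finset.add_sum_erase _ _ (Finset.mem_univ m), if_pos rfl,
      Finset.sum_congr rfl (g := fun _ => (1 : ℚ)) (fun x hx => if_neg (Finset.ne_of_mem_erase hx)),
      Finset.sum_const, Finset.card_erase_of_mem (Finset.mem_univ m), Finset.card_univ,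
      Finset.prod_range_succ, ← hk]
    simp only [nsmul_eq_mul]
    have : k + 2 - 1 = k + 1 := rfl
    rw [this]
    push_cast
    ring
  · intro x _ x' _ hne
    rw [Function.onFun, Finset.disjoint_left]
    intro p hp hp'
    rw [mem_FS] at hp hp'
    have := (hp.2 x).2 (by simp)
    rw [hp'.2] at this
    exact hne (by simpa using this)

end TreePoly

noncomputable instance Vn.instLO (n : ℕ) : LinearOrder (Vn n) :=
  inferInstanceAs (LinearOrder {v : ℕ // v ∈ Finset.Icc 1 n})

noncomputable instance Vn.instFT (n : ℕ) : Fintype (Vn n) :=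
  inferInstanceAs (Fintype {v : ℕ // v ∈ Finset.Icc 1 n})

theorem Vn.card_eq (n : ℕ) : Fintype.card (Vn n) = n := by
  exact (Fintype.card_coe (Finset.Icc 1 n)).trans (by simp)

noncomputable instance Tr.instFT (n : ℕ) : Fintype (Tr n) := by
  classical
  exact inferInstanceAs (Fintype {p : Vn n → Option (Vn n) //
    IsForest p ∧ ∃! v : Vn n, p v = none})

theorem tree_poly_aux (n : ℕ) (hn : 1 ≤ n) (t : ℚ) : (∑ᶠ T : Tr (n + 1), t ^ pvF T.1) =
    t * ∏ i ∈ Finset.range n, (((i : ℚ) + 1) * t + ((n - i : ℕ) : ℚ)) := by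
  classical
  obtain ⟨k, rfl⟩ : ∃ k, n = k + 1 := ⟨n - 1, by omega⟩
  have h := TreePoly.tree_sum (V := Vn (k + 1 + 1)) t k (by rw [Vn.card_eq])
  rw [finsum_eq_sum_of_fintype]
  have h2 : ∑ T : Tr (k + 1 + 1), t ^ pvF T.1 =
      ∑ p ∈ Finset.univ.filter (fun p : Vn (k + 1 + 1) → Option (Vn (k + 1 + 1)) =>
        TreePoly.IsF p ∧ ∃! v, p v = none), t ^ (Set.ncard {v | TreePoly.Prp p v}) := by
    refine Finset.sum_bij (fun T _ => T.1) ?_ ?_ ?_ ?_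
    · intro T _
      simp only [Finset.mem_filter, Finset.mem_univ, true_and]
      exact T.2
    · intro a _ b _ hab
      exact Subtype.ext hab
    · intro p hp
      simp only [Finset.mem_filter, Finset.mem_univ, true_and] at hp
      exact ⟨⟨p, hp⟩, Finset.mem_univ _, rfl⟩
    · intro T _
      rfl
  rw [h2, h, Vn.card_eq, ← Finset.prod_range_reflect]
  congr 1
  apply Finset.prod_congr rfl
  intro i hi
  rw [Finset.mem_range] at hi
  have e : k + 1 - 1 - i = k - i := by omega
  rw [e, Nat.cast_sub (by omega), Nat.cast_sub (by omega)]
  push_cast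
  ring

/-- For `n ≥ 1`, `Σ_{T ∈ 𝒯_{n+1}} t^{pv(T)} = t · Π_{i=0}^{n−1} ((i+1)·t + (n − i))`;
in particular, at `t = 1`, `|𝒯_{n+1}| = (n+1)^n`. -/
theorem tree_poly (n : ℕ) (hn : 1 ≤ n) :
    (∀ t : ℚ, (∑ᶠ T : Tr (n + 1), t ^ pvF T.1) =
        t * ∏ i ∈ Finset.range n, (((i : ℚ) + 1) * t + ((n - i : ℕ) : ℚ))) ∧
      Nat.card (Tr (n + 1)) = (n + 1) ^ n := by
  refine ⟨tree_poly_aux n hn, ?_⟩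
  have h := tree_poly_aux n hn 1
  simp only [one_pow, mul_one, one_mul] at h
  rw [finsum_eq_sum_of_fintype, Finset.sum_const, Finset.card_univ,
    Finset.prod_congr rfl (g := fun _ => (n : ℚ) + 1)] at h
  · rw [Nat.card_eq_fintype_card]
    simp only [nsmul_eq_mul, mul_one, Finset.prod_const, Finset.card_range] at h
    exact_mod_cast h
  · intro i hi
    rw [Finset.mem_range] at hi
    rw [Nat.cast_sub hi.le]
    ring
end
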